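/- arXiv:1810.06095 — 5 statements merged into one kernel-verified Lean document; each statement's English description precedes it below -/
import Mathlib

section
/- Fix σ > 0, ρ > 0 and α ∈ ℝ, and let (γ_n) be a sequence of positive reals with γ_n/n^α → ρ as n → ∞. For each n let μ_n be the Gaussian measure N(0, σ²·I_n) on ℝⁿ. Then the limit as n → ∞ of ∫_{ℝⁿ} exp(−(2γ_n·κ_{n-1}/(n·κ_n))·|y|) dμ_n(y) equals 0 if α > 0, equals exp(−√(2/π)·ρ·σ) if α = 0, and equals 1 if α < 0. -/
/-!
Write `c n = 2 γ n κ (n-1) / (n κ n)`. Log-convexity of `Γ` pins the ratio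
`Γ (n/2+1) / Γ ((n+1)/2)` between `√(n/2)` and `√((n+1)/2)`, so `c n * √n ∼ √(2/π) * γ n`
(`tendsto_kappa_ratio`). On the other hand `|y|` concentrates around `σ √n` at scale `O(1)`,
because `|y|²` is a sum of `n` i.i.d. variables of mean `σ²` and finite variance. As `exp (-·)` is
`1`-Lipschitz on `[0, ∞)`, this gives
`|∫ exp (-c |y|) - exp (-c √n σ)| ≤ C c` with `C` independent of `n` and `c ≥ 0`
(`abs_expIntegral_sub_le`). When `c n * √n` converges, `c n → 0` and the limit is read off; when
`c n * √n → ∞`, monotonicity in `c` bounds the integral by the one with `c n = s / √n`, for every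
fixed `s`.
-/

open Filter Real MeasureTheory ProbabilityTheory

/-- `κ n`, the volume of the unit ball in `ℝⁿ`. -/
noncomputable def kappa (n : ℕ) : ℝ := Real.pi ^ ((n : ℝ) / 2) / Real.Gamma ((n : ℝ) / 2 + 1)

/-- The Gaussian measure `N(0, σ² I_n)` on `ℝⁿ`. -/
noncomputable def gaussianPi (n : ℕ) (σ : ℝ) : Measure (Fin n → ℝ) :=
  Measure.pi fun _ => gaussianReal 0 ⟨σ ^ 2, sq_nonneg σ⟩

/-- The Laplace transform at `c` of the Euclidean norm under `N(0, σ² I_n)`. -/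
noncomputable def expIntegral (σ : ℝ) (n : ℕ) (c : ℝ) : ℝ :=
  ∫ y : Fin n → ℝ, Real.exp (-c * Real.sqrt (∑ i, y i ^ 2)) ∂(gaussianPi n σ)

/-- The variance `σ²` as a nonnegative real. -/
noncomputable def varianceNN (σ : ℝ) : NNReal := Real.toNNReal (σ ^ 2)

lemma gaussianPi_eq (n : ℕ) (σ : ℝ) :
    gaussianPi n σ = Measure.pi fun _ => gaussianReal 0 (varianceNN σ) := by
  have h : varianceNN σ = ⟨σ ^ 2, sq_nonneg σ⟩ := Real.toNNReal_of_nonneg (sq_nonneg σ)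
  rw [h]
  rfl

/-- The variance of the square of a centred Gaussian variable of variance `σ²`. -/
noncomputable def sqVariance (σ : ℝ) : ℝ :=
  Var[fun x : ℝ => x ^ 2; gaussianReal 0 (varianceNN σ)]

instance (n : ℕ) (σ : ℝ) : IsProbabilityMeasure (gaussianPi n σ) := by
  rw [gaussianPi_eq]; infer_instance

lemma memLp_sq_gaussianReal (v : NNReal) : MemLp (fun x : ℝ => x ^ 2) 2 (gaussianReal 0 v) := by
  rw [memLp_two_iff_integrable_sq (by fun_prop)]
  have h := (memLp_id_gaussianReal (μ := 0) (v := v) 4).integrable_norm_pow (by norm_num)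
  refine h.congr (ae_of_all _ fun x => ?_)
  simp only [id, Real.norm_eq_abs]
  rw [← pow_mul]
  exact Even.pow_abs (by decide) x

lemma integral_sq_gaussianReal (v : NNReal) : ∫ x : ℝ, x ^ 2 ∂(gaussianReal 0 v) = v := by
  have h := variance_eq_integral (μ := gaussianReal 0 v) (X := id) (by fun_prop)
  rw [variance_id_gaussianReal] at h
  simpa using h.symm

lemma memLp_sum_sq (n : ℕ) (σ : ℝ) :
    MemLp (fun y : Fin n → ℝ => ∑ i, y i ^ 2) 2 (gaussianPi n σ) := by
  rw [gaussianPi_eq]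
  refine memLp_finsetSum _ fun i _ => ?_
  exact (memLp_sq_gaussianReal _).comp_measurePreserving
    (measurePreserving_eval (fun _ : Fin n => gaussianReal 0 (varianceNN σ)) i)

lemma integral_sum_sq (n : ℕ) (σ : ℝ) :
    ∫ y : Fin n → ℝ, ∑ i, y i ^ 2 ∂(gaussianPi n σ) = n * σ ^ 2 := by
  rw [gaussianPi_eq]
  rw [integral_finsetSum]
  · have : ∀ i : Fin n, ∫ y : Fin n → ℝ, y i ^ 2
        ∂(Measure.pi fun _ => gaussianReal 0 (varianceNN σ)) = σ ^ 2 := fun i => by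
      rw [integral_comp_eval (μ := fun _ : Fin n => gaussianReal 0 (varianceNN σ))
        (f := fun x : ℝ => x ^ 2) (by fun_prop), integral_sq_gaussianReal]
      exact Real.coe_toNNReal _ (sq_nonneg σ)
    simp [this]
  · intro i _
    exact integrable_comp_eval (μ := fun _ : Fin n => gaussianReal 0 (varianceNN σ))
      (f := fun x : ℝ => x ^ 2) ((memLp_sq_gaussianReal _).integrable (by norm_num))

lemma integral_sum_sq_sub_sq (n : ℕ) (σ : ℝ) :
    ∫ y : Fin n → ℝ, (∑ i, y i ^ 2 - n * σ ^ 2) ^ 2 ∂(gaussianPi n σ) = n * sqVariance σ := by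
  have h := variance_sum_pi (μ := fun _ : Fin n => gaussianReal 0 (varianceNN σ))
    (X := fun _ x => x ^ 2) (fun _ => memLp_sq_gaussianReal _)
  have e : (∑ i, fun ω : Fin n → ℝ => ω i ^ 2) = fun ω => ∑ i, ω i ^ 2 := by
    ext; simp
  rw [e, ← gaussianPi_eq,
    variance_eq_integral (memLp_sum_sq n σ).aestronglyMeasurable.aemeasurable,
    integral_sum_sq] at h
  rw [h]
  simp [sqVariance]

lemma abs_exp_neg_sub_exp_neg_le {a b : ℝ} (ha : 0 ≤ a) (hb : 0 ≤ b) :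
    |Real.exp (-a) - Real.exp (-b)| ≤ |a - b| := by
  wlog h : a ≤ b generalizing a b
  · rw [abs_sub_comm, abs_sub_comm a b]
    exact this hb ha (le_of_not_ge h)
  have h1 : Real.exp (-b) ≤ Real.exp (-a) := Real.exp_le_exp.2 (by linarith)
  have h2 : Real.exp (-a) ≤ 1 := Real.exp_le_one_iff.2 (by linarith)
  have h3 : Real.exp (-b) = Real.exp (-a) * Real.exp (a - b) := by
    rw [← Real.exp_add]; ring_nf
  have h4 := Real.add_one_le_exp (a - b)
  rw [abs_of_nonneg (by linarith), abs_of_nonpos (by linarith), h3]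
  nlinarith [Real.exp_pos (-a)]

/-- The pointwise form of norm concentration: if `s` is within `O(√n)` of `n σ²`, then `√s` is
within `O(1)` of `√n σ`. The right side is quadratic so that it integrates to a variance. -/
lemma abs_sqrt_sub_le {σ s : ℝ} {n : ℕ} (hσ : 0 < σ) (hs : 0 ≤ s) (hn : 0 < n) :
    |Real.sqrt s - Real.sqrt n * σ| ≤ (1 + (s - n * σ ^ 2) ^ 2 / n) / (2 * σ) := by
  have hn' : (0 : ℝ) < n := by exact_mod_cast hn
  obtain ⟨r, hr, hrn⟩ : ∃ r : ℝ, 0 < r ∧ (n : ℝ) = r ^ 2 :=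
    ⟨Real.sqrt n, Real.sqrt_pos.2 hn', (Real.sq_sqrt hn'.le).symm⟩
  obtain ⟨x, hx, hxs⟩ : ∃ x : ℝ, 0 ≤ x ∧ s = x ^ 2 :=
    ⟨Real.sqrt s, Real.sqrt_nonneg _, (Real.sq_sqrt hs).symm⟩
  rw [hrn, hxs, Real.sqrt_sq hx, Real.sqrt_sq hr.le, le_div_iff₀ (by positivity)]
  set w := |x - r * σ| * (x + r * σ) / r with hw
  have h1 : (x ^ 2 - r ^ 2 * σ ^ 2) ^ 2 / r ^ 2 = w ^ 2 := by
    rw [hw, div_pow, mul_pow, sq_abs]; ring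
  have h2 : |x - r * σ| * σ ≤ w := by
    rw [hw, le_div_iff₀ hr]
    nlinarith [abs_nonneg (x - r * σ), mul_nonneg (abs_nonneg (x - r * σ)) hx]
  rw [h1]
  nlinarith [sq_nonneg (w - 1)]

lemma integrable_exp_neg_mul_norm (σ : ℝ) (n : ℕ) {c : ℝ} (hc : 0 ≤ c) :
    Integrable (fun y : Fin n → ℝ => Real.exp (-c * Real.sqrt (∑ i, y i ^ 2)))
      (gaussianPi n σ) := by
  refine Integrable.of_bound (C := 1) (Measurable.aestronglyMeasurable (by fun_prop)) (ae_of_all _ fun y => ?_)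
  rw [Real.norm_eq_abs, Real.abs_exp, Real.exp_le_one_iff]
  nlinarith [mul_nonneg hc (Real.sqrt_nonneg (∑ i, y i ^ 2))]

lemma abs_expIntegral_sub_le {σ c : ℝ} {n : ℕ} (hσ : 0 < σ) (hc : 0 ≤ c) (hn : 0 < n) :
    |expIntegral σ n c - Real.exp (-(c * Real.sqrt n * σ))| ≤
      c * ((1 + sqVariance σ) / (2 * σ)) := by
  have hn' : (n : ℝ) ≠ 0 := by positivity
  have hI : Integrable (fun y : Fin n → ℝ => (∑ i, y i ^ 2 - n * σ ^ 2) ^ 2)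
      (gaussianPi n σ) :=
    ((memLp_sum_sq n σ).sub (memLp_const (n * σ ^ 2 : ℝ))).integrable_sq
  have hbound : Integrable (fun y : Fin n → ℝ =>
      c * ((1 + (∑ i, y i ^ 2 - n * σ ^ 2) ^ 2 / n) / (2 * σ))) (gaussianPi n σ) :=
    ((((integrable_const 1).add (hI.div_const _)).div_const _).const_mul _)
  have e1 : expIntegral σ n c - Real.exp (-(c * Real.sqrt n * σ)) =
      ∫ y : Fin n → ℝ, (Real.exp (-c * Real.sqrt (∑ i, y i ^ 2)) -
        Real.exp (-(c * Real.sqrt n * σ))) ∂(gaussianPi n σ) := by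
    rw [integral_sub (integrable_exp_neg_mul_norm σ n hc) (integrable_const _)]
    simp [expIntegral]
  have e2 : ∫ y : Fin n → ℝ, c * ((1 + (∑ i, y i ^ 2 - n * σ ^ 2) ^ 2 / n) / (2 * σ))
      ∂(gaussianPi n σ) = c * ((1 + sqVariance σ) / (2 * σ)) := by
    rw [integral_const_mul, integral_div, integral_add (integrable_const _) (hI.div_const _),
      integral_div, integral_sum_sq_sub_sq]
    simp [hn']
  rw [e1, ← e2, ← Real.norm_eq_abs]
  refine norm_integral_le_of_norm_le hbound (ae_of_all _ fun y => ?_)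
  have hs : 0 ≤ ∑ i, y i ^ 2 := Finset.sum_nonneg fun i _ => sq_nonneg _
  rw [Real.norm_eq_abs, neg_mul]
  refine (abs_exp_neg_sub_exp_neg_le (by positivity) (by positivity)).trans ?_
  rw [mul_assoc, ← mul_sub, abs_mul, abs_of_nonneg hc]
  exact mul_le_mul_of_nonneg_left (abs_sqrt_sub_le hσ hs hn) hc

lemma tendsto_sqrt_natCast : Tendsto (fun n : ℕ => Real.sqrt n) atTop atTop :=
  Real.tendsto_sqrt_atTop.comp tendsto_natCast_atTop_atTop

lemma tendsto_expIntegral {σ L : ℝ} (hσ : 0 < σ) {d : ℕ → ℝ} (hd : ∀ n, 0 ≤ d n)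
    (h : Tendsto (fun n : ℕ => d n * Real.sqrt n) atTop (nhds L)) :
    Tendsto (fun n => expIntegral σ n (d n)) atTop (nhds (Real.exp (-(L * σ)))) := by
  have hd0 : Tendsto d atTop (nhds 0) := by
    refine (h.div_atTop tendsto_sqrt_natCast).congr' ?_
    filter_upwards [eventually_gt_atTop 0] with n hn
    have : Real.sqrt n ≠ 0 := (Real.sqrt_pos.2 (by exact_mod_cast hn)).ne'
    field_simp
  have h1 : Tendsto (fun n : ℕ => expIntegral σ n (d n) -
      Real.exp (-(d n * Real.sqrt n * σ))) atTop (nhds 0) := by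
    have h0 := hd0.mul_const ((1 + sqVariance σ) / (2 * σ))
    rw [zero_mul] at h0
    refine squeeze_zero_norm' ?_ h0
    filter_upwards [eventually_gt_atTop 0] with n hn
    exact abs_expIntegral_sub_le hσ (hd n) hn
  have h2 : Tendsto (fun n : ℕ => Real.exp (-(d n * Real.sqrt n * σ))) atTop
      (nhds (Real.exp (-(L * σ)))) :=
    (Real.continuous_exp.tendsto _).comp (h.mul_const σ).neg
  simpa using h1.add h2

lemma tendsto_expIntegral_zero {σ : ℝ} (hσ : 0 < σ) {d : ℕ → ℝ} (hd : ∀ n, 0 ≤ d n)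
    (h : Tendsto (fun n : ℕ => d n * Real.sqrt n) atTop atTop) :
    Tendsto (fun n => expIntegral σ n (d n)) atTop (nhds 0) := by
  rw [tendsto_order]
  constructor
  · intro a ha
    exact Eventually.of_forall fun n => ha.trans_le (integral_nonneg fun y => (Real.exp_pos _).le)
  intro ε hε
  have hs0 : Tendsto (fun s : ℝ => Real.exp (-(s * σ))) atTop (nhds 0) :=
    Real.tendsto_exp_neg_atTop_nhds_zero.comp (tendsto_id.atTop_mul_const hσ)
  obtain ⟨s, hsε, hs⟩ := ((hs0.eventually (gt_mem_nhds hε)).and (eventually_ge_atTop 0)).exists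
  have hlim : Tendsto (fun n : ℕ => expIntegral σ n (s / Real.sqrt n)) atTop
      (nhds (Real.exp (-(s * σ)))) := by
    refine tendsto_expIntegral hσ (fun n => by positivity) (tendsto_const_nhds.congr' ?_)
    filter_upwards [eventually_gt_atTop 0] with n hn
    have : Real.sqrt n ≠ 0 := (Real.sqrt_pos.2 (by exact_mod_cast hn)).ne'
    field_simp
  filter_upwards [hlim.eventually (gt_mem_nhds hsε), h.eventually_ge_atTop s,
    eventually_gt_atTop 0] with n h1 h2 hn
  refine lt_of_le_of_lt ?_ h1
  have hle : s / Real.sqrt n ≤ d n := by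
    rwa [div_le_iff₀ (Real.sqrt_pos.2 (by exact_mod_cast hn))]
  refine integral_mono (integrable_exp_neg_mul_norm σ n (hd n))
    (integrable_exp_neg_mul_norm σ n (by positivity)) fun y => Real.exp_le_exp.2 ?_
  exact mul_le_mul_of_nonneg_right (neg_le_neg hle) (Real.sqrt_nonneg _)

lemma Gamma_add_half_sq_le {x : ℝ} (hx : 0 < x) :
    Real.Gamma (x + 1 / 2) ^ 2 ≤ x * Real.Gamma x ^ 2 := by
  have h := Real.Gamma_mul_add_mul_le_rpow_Gamma_mul_rpow_Gamma hx (by linarith : 0 < x + 1)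
    (by norm_num : (0 : ℝ) < 1 / 2) (by norm_num : (0 : ℝ) < 1 / 2) (by norm_num)
  have e : 1 / 2 * x + 1 / 2 * (x + 1) = x + 1 / 2 := by ring
  have hG := Real.Gamma_pos_of_pos hx
  have hG1 := Real.Gamma_pos_of_pos (by linarith : 0 < x + 1)
  rw [e, ← Real.sqrt_eq_rpow, ← Real.sqrt_eq_rpow, ← Real.sqrt_mul hG.le] at h
  have h2 := pow_le_pow_left₀ (Real.Gamma_pos_of_pos (by linarith : 0 < x + 1 / 2)).le h 2
  rw [Real.sq_sqrt (by positivity), Real.Gamma_add_one hx.ne'] at h2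
  linarith

/-- Both bounds are log-convexity of `Γ` at consecutive half-steps. -/
lemma Gamma_ratio_bounds {n : ℕ} (hn : 0 < n) :
    Real.sqrt (n / 2) ≤ Real.Gamma (n / 2 + 1) / Real.Gamma ((n + 1) / 2) ∧
    Real.Gamma (n / 2 + 1) / Real.Gamma ((n + 1) / 2) ≤ Real.sqrt ((n + 1) / 2) := by
  have hn' : (0 : ℝ) < n := by exact_mod_cast hn
  have hA := Real.Gamma_pos_of_pos (by positivity : (0 : ℝ) < n / 2 + 1)
  have hB := Real.Gamma_pos_of_pos (by positivity : (0 : ℝ) < ((n : ℝ) + 1) / 2)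
  have h1 := Gamma_add_half_sq_le (by positivity : (0 : ℝ) < ((n : ℝ) + 1) / 2)
  have h2 := Gamma_add_half_sq_le (by positivity : (0 : ℝ) < (n : ℝ) / 2)
  rw [show ((n : ℝ) + 1) / 2 + 1 / 2 = n / 2 + 1 by ring] at h1
  rw [show (n : ℝ) / 2 + 1 / 2 = (n + 1) / 2 by ring] at h2
  have h3 := Real.Gamma_add_one (by positivity : (n : ℝ) / 2 ≠ 0)
  constructor
  · rw [Real.sqrt_le_left (by positivity), div_pow, le_div_iff₀ (by positivity), h3]
    nlinarith
  · refine Real.le_sqrt_of_sq_le ?_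
    rw [div_pow, div_le_iff₀ (by positivity)]
    linarith

lemma kappa_ratio {n : ℕ} (hn : 0 < n) :
    2 * kappa (n - 1) / (n * kappa n) * Real.sqrt n =
      2 / (Real.sqrt Real.pi * Real.sqrt n) *
        (Real.Gamma (n / 2 + 1) / Real.Gamma ((n + 1) / 2)) := by
  have hn' : (0 : ℝ) < n := by exact_mod_cast hn
  have hA := Real.Gamma_pos_of_pos (by positivity : (0 : ℝ) < n / 2 + 1)
  have hB := Real.Gamma_pos_of_pos (by positivity : (0 : ℝ) < ((n : ℝ) + 1) / 2)
  have hc : ((n - 1 : ℕ) : ℝ) = n - 1 := by rw [Nat.cast_sub hn]; simp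
  have hp : Real.pi ^ ((n : ℝ) / 2) = Real.pi ^ (((n : ℝ) - 1) / 2) * Real.sqrt Real.pi := by
    rw [Real.sqrt_eq_rpow, ← Real.rpow_add Real.pi_pos]; ring_nf
  have hP : 0 < Real.pi ^ (((n : ℝ) - 1) / 2) := Real.rpow_pos_of_pos Real.pi_pos _
  have hsp : 0 < Real.sqrt Real.pi := Real.sqrt_pos.2 Real.pi_pos
  have hsn : 0 < Real.sqrt n := Real.sqrt_pos.2 hn'
  unfold kappa
  rw [hc, hp, show ((n : ℝ) - 1) / 2 + 1 = (n + 1) / 2 by ring]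
  field_simp
  rw [Real.sq_sqrt hn'.le]

lemma tendsto_kappa_ratio :
    Tendsto (fun n : ℕ => 2 * kappa (n - 1) / (n * kappa n) * Real.sqrt n) atTop
      (nhds (Real.sqrt (2 / Real.pi))) := by
  have hup : Tendsto (fun n : ℕ => Real.sqrt (2 / Real.pi * (1 + 1 / (n : ℝ)))) atTop
      (nhds (Real.sqrt (2 / Real.pi))) := by
    have h := (tendsto_one_div_atTop_nhds_zero_nat (𝕜 := ℝ)).const_add 1 |>.const_mul (2 / Real.pi)
    simpa using h.sqrt
  have key : ∀ n : ℕ, 0 < n → ∀ x : ℝ, 0 ≤ x →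
      2 / (Real.sqrt Real.pi * Real.sqrt n) * Real.sqrt x =
        Real.sqrt (2 / Real.pi * (2 * x / n)) := by
    intro n hn x hx
    rw [Real.sqrt_mul (by positivity), Real.sqrt_div zero_le_two,
      Real.sqrt_div (by positivity), Real.sqrt_mul zero_le_two]
    calc _ = (Real.sqrt 2 * Real.sqrt 2) / (Real.sqrt Real.pi * Real.sqrt n) * Real.sqrt x := by
          rw [Real.mul_self_sqrt zero_le_two]
      _ = _ := by ring
  refine tendsto_of_tendsto_of_tendsto_of_le_of_le' tendsto_const_nhds hup ?_ ?_
  · filter_upwards [eventually_gt_atTop 0] with n hn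
    have hn' : (n : ℝ) ≠ 0 := by positivity
    rw [kappa_ratio hn]
    refine le_trans (le_of_eq ?_)
      (mul_le_mul_of_nonneg_left (Gamma_ratio_bounds hn).1 (by positivity))
    rw [key n hn _ (by positivity)]
    congr 1
    field_simp
  · filter_upwards [eventually_gt_atTop 0] with n hn
    have hn' : (n : ℝ) ≠ 0 := by positivity
    rw [kappa_ratio hn]
    refine (mul_le_mul_of_nonneg_left (Gamma_ratio_bounds hn).2 (by positivity)).trans
      (le_of_eq ?_)
    rw [key n hn _ (by positivity)]
    congr 1
    field_simp

lemma kappa_nonneg (n : ℕ) : 0 ≤ kappa n :=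
  div_nonneg (Real.rpow_nonneg Real.pi_pos.le _) (Real.Gamma_nonneg_of_nonneg (by positivity))

/-- Limit of the probability that a Gaussian perturbation (variance `σ²` per coordinate) of
the typical signal lies in its zero cell, when `γ_n ∼ ρ n^α`. -/
theorem separation_gaussian_displacement (σ ρ α : ℝ) (hσ : 0 < σ) (hρ : 0 < ρ)
    (γ : ℕ → ℝ) (hγpos : ∀ n, 0 < γ n)
    (hγ : Tendsto (fun n : ℕ => γ n / (n : ℝ) ^ α) atTop (nhds ρ)) :
    (0 < α →
      Tendsto (fun n : ℕ =>
          ∫ y : Fin n → ℝ,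
            Real.exp (-(2 * γ n * kappa (n - 1) / ((n : ℝ) * kappa n)) *
              Real.sqrt (∑ i, y i ^ 2)) ∂(gaussianPi n σ))
        atTop (nhds 0)) ∧
    (α = 0 →
      Tendsto (fun n : ℕ =>
          ∫ y : Fin n → ℝ,
            Real.exp (-(2 * γ n * kappa (n - 1) / ((n : ℝ) * kappa n)) *
              Real.sqrt (∑ i, y i ^ 2)) ∂(gaussianPi n σ))
        atTop (nhds (Real.exp (-(Real.sqrt (2 / Real.pi)) * ρ * σ)))) ∧
    (α < 0 →
      Tendsto (fun n : ℕ =>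
          ∫ y : Fin n → ℝ,
            Real.exp (-(2 * γ n * kappa (n - 1) / ((n : ℝ) * kappa n)) *
              Real.sqrt (∑ i, y i ^ 2)) ∂(gaussianPi n σ))
        atTop (nhds 1)) := by
  have hd : ∀ n : ℕ, 0 ≤ 2 * γ n * kappa (n - 1) / ((n : ℝ) * kappa n) := fun n =>
    div_nonneg (mul_nonneg (mul_nonneg zero_le_two (hγpos n).le) (kappa_nonneg _))
      (mul_nonneg (Nat.cast_nonneg _) (kappa_nonneg _))
  have hfac : ∀ n : ℕ, γ n * (2 * kappa (n - 1) / (n * kappa n) * Real.sqrt n) =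
      2 * γ n * kappa (n - 1) / ((n : ℝ) * kappa n) * Real.sqrt n := fun n => by ring
  have hγ' : (fun n : ℕ => γ n / (n : ℝ) ^ α * (n : ℝ) ^ α) =ᶠ[atTop] γ := by
    filter_upwards [eventually_gt_atTop 0] with n hn
    exact div_mul_cancel₀ _ (Real.rpow_pos_of_pos (by exact_mod_cast hn) _).ne'
  have hsq : 0 < Real.sqrt (2 / Real.pi) := Real.sqrt_pos.2 (div_pos two_pos Real.pi_pos)
  refine ⟨fun hα => ?_, fun hα => ?_, fun hα => ?_⟩
  · have h1 : Tendsto γ atTop atTop :=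
      (hγ.pos_mul_atTop hρ ((tendsto_rpow_atTop hα).comp tendsto_natCast_atTop_atTop)).congr' hγ'
    exact tendsto_expIntegral_zero hσ hd
      ((h1.atTop_mul_pos hsq tendsto_kappa_ratio).congr hfac)
  · subst hα
    have h1 : Tendsto γ atTop (nhds ρ) := by simpa using hγ
    have h2 := tendsto_expIntegral hσ hd ((h1.mul tendsto_kappa_ratio).congr hfac)
    rwa [show -(ρ * Real.sqrt (2 / Real.pi) * σ) = -(Real.sqrt (2 / Real.pi)) * ρ * σ by ring]
      at h2
  · have h0 : Tendsto (fun n : ℕ => (n : ℝ) ^ α) atTop (nhds 0) := by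
      simpa [Function.comp_def] using
        (tendsto_rpow_neg_atTop (neg_pos.2 hα)).comp tendsto_natCast_atTop_atTop
    have h1 : Tendsto γ atTop (nhds 0) := by
      simpa using (hγ.mul h0).congr' hγ'
    have h2 := tendsto_expIntegral hσ hd ((h1.mul tendsto_kappa_ratio).congr hfac)
    rwa [zero_mul, zero_mul, neg_zero, Real.exp_zero] at h2
end

section
/- Fix ρ > 0 and let (γ_n) be a sequence of positive reals with γ_n/n → ρ as n → ∞. Define V_n = n!·κ_n·(n·κ_n/(2γ_n·κ_{n-1}))ⁿ. Then (1/n)·ln V_n → −ln ρ + ln π − 1/2 as n → ∞; consequently V_n → 0 if ρ > π/√e, and V_n → ∞ if ρ < π/√e. -/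
/-!
Write `d n = log Γ(n/2 + 1) - log Γ(n/2 + 1/2)`. Legendre's duplication formula at `s = (n + 1)/2`
gives `log Γ(n/2 + 1) + log Γ(n/2 + 1/2) = log n! - n log 2 + (log π)/2`, so `log κ_n` and
`log κ_n - log κ_{n-1}` are both explicit in terms of `log n!` and `d n`. Log-convexity of `Γ`
together with `Γ(x + 1) = x Γ(x)` traps `d n` between `log(n/2)/2` and
`log((n+1)/2)/2 ≤ log(n/2)/2 + 1/n` (`le_logGammaDiff`, `logGammaDiff_le`), hence
`d n - log(n/2)/2 → 0`. Substituting this and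
Stirling's `(log n!)/n - log n → -1` into the exact formula `log_volume_formula` for
`(log V_n)/n`, the `log n` terms cancel and the limit `-log ρ + log π - 1/2` remains.
The threshold is its change of sign: `V_n = exp (n · (log V_n)/n)` goes to `0` when the limit
is negative and to `∞` when it is positive, and `log (π / √e) = log π - 1/2`.
-/

open Filter Real

open Topology

/-- Up to the additive constant `(log π)/2`, the logarithm of the ratio `κ_{n-1} / κ_n`
for `n ≥ 1`. -/
noncomputable def logGammaDiff (n : ℕ) : ℝ :=
  log (Gamma ((n : ℝ) / 2 + 1)) - log (Gamma ((n : ℝ) / 2 + 1 / 2))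

lemma log_Gamma_add_one {x : ℝ} (hx : 0 < x) :
    log (Gamma (x + 1)) = log x + log (Gamma x) := by
  rw [Gamma_add_one hx.ne', log_mul hx.ne' (Gamma_pos_of_pos hx).ne']

lemma log_Gamma_midpoint {x : ℝ} (hx : 0 < x) :
    2 * log (Gamma (x + 1 / 2)) ≤ log (Gamma x) + log (Gamma (x + 1)) := by
  have hx1 : x + 1 ∈ Set.Ioi (0 : ℝ) := Set.mem_Ioi.2 (by linarith)
  have h := convexOn_log_Gamma.2 (Set.mem_Ioi.2 hx) hx1
    (show (0 : ℝ) ≤ 1 / 2 by norm_num) (show (0 : ℝ) ≤ 1 / 2 by norm_num) (by norm_num)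
  have e : (1 / 2 : ℝ) • x + (1 / 2 : ℝ) • (x + 1) = x + 1 / 2 := by
    simp only [smul_eq_mul]; ring
  rw [e] at h
  simp only [Function.comp, smul_eq_mul] at h
  linarith

lemma le_logGammaDiff {n : ℕ} (hn : 0 < n) : log ((n : ℝ) / 2) / 2 ≤ logGammaDiff n := by
  have hn' : (0 : ℝ) < (n : ℝ) / 2 := by positivity
  have h1 := log_Gamma_midpoint hn'
  have h2 := log_Gamma_add_one hn'
  unfold logGammaDiff
  linarith

lemma logGammaDiff_le {n : ℕ} (hn : 0 < n) :
    logGammaDiff n ≤ log ((n : ℝ) / 2) / 2 + 1 / (n : ℝ) := by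
  have hn' : (0 : ℝ) < (n : ℝ) := by positivity
  have hx : (0 : ℝ) < (n : ℝ) / 2 + 1 / 2 := by positivity
  have h1 := log_Gamma_midpoint hx
  have h2 := log_Gamma_add_one hx
  have e : (n : ℝ) / 2 + 1 / 2 + 1 / 2 = (n : ℝ) / 2 + 1 := by ring
  rw [e] at h1
  have h3 : log ((n : ℝ) / 2 + 1 / 2) = log ((n : ℝ) / 2) + log (1 + 1 / (n : ℝ)) := by
    rw [← log_mul (by positivity) (by positivity)]
    congr 1
    field_simp
  have h4 : log (1 + 1 / (n : ℝ)) ≤ 1 / (n : ℝ) := by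
    have := log_le_sub_one_of_pos (show (0 : ℝ) < 1 + 1 / (n : ℝ) by positivity)
    linarith
  have h5 : 0 < 1 / (n : ℝ) := by positivity
  unfold logGammaDiff
  linarith

lemma tendsto_logGammaDiff_sub :
    Tendsto (fun n : ℕ => logGammaDiff n - log ((n : ℝ) / 2) / 2) atTop (𝓝 0) := by
  refine tendsto_of_tendsto_of_tendsto_of_le_of_le' tendsto_const_nhds
    tendsto_one_div_atTop_nhds_zero_nat ?_ ?_
  · filter_upwards [eventually_gt_atTop 0] with n hn
    linarith [le_logGammaDiff hn]
  · filter_upwards [eventually_gt_atTop 0] with n hn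
    linarith [logGammaDiff_le hn]

/-- The logarithm of Legendre's duplication formula at `s = (n + 1) / 2`. -/
lemma log_duplication (n : ℕ) :
    log (Gamma ((n : ℝ) / 2 + 1)) + log (Gamma ((n : ℝ) / 2 + 1 / 2)) =
      log (n.factorial : ℝ) - n * log 2 + log π / 2 := by
  have h := Gamma_mul_Gamma_add_half ((n : ℝ) / 2 + 1 / 2)
  have e1 : (n : ℝ) / 2 + 1 / 2 + 1 / 2 = (n : ℝ) / 2 + 1 := by ring
  have e2 : 2 * ((n : ℝ) / 2 + 1 / 2) = (n : ℝ) + 1 := by ring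
  have e3 : (1 : ℝ) - ((n : ℝ) + 1) = -(n : ℝ) := by ring
  rw [e1, e2, e3, Gamma_nat_eq_factorial] at h
  have hf : (n.factorial : ℝ) ≠ 0 := by positivity
  have hp : (2 : ℝ) ^ (-(n : ℝ)) ≠ 0 := by positivity
  have hs : √π ≠ 0 := by positivity
  have ha : Gamma ((n : ℝ) / 2 + 1) ≠ 0 := (Gamma_pos_of_pos (by positivity)).ne'
  have hb : Gamma ((n : ℝ) / 2 + 1 / 2) ≠ 0 := (Gamma_pos_of_pos (by positivity)).ne'
  rw [add_comm, ← log_mul hb ha, h, log_mul (mul_ne_zero hf hp) hs, log_mul hf hp,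
    log_rpow two_pos, log_sqrt pi_pos.le]
  ring

lemma kappa_pos (n : ℕ) : 0 < kappa n :=
  div_pos (by positivity) (Gamma_pos_of_pos (by positivity))

lemma log_kappa (n : ℕ) :
    log (kappa n) = (n : ℝ) / 2 * log π - log (Gamma ((n : ℝ) / 2 + 1)) := by
  unfold kappa
  rw [log_div (by positivity) (Gamma_pos_of_pos (by positivity)).ne', log_rpow pi_pos]

lemma log_kappa_pred {n : ℕ} (hn : 0 < n) :
    log (kappa (n - 1)) =
      ((n : ℝ) - 1) / 2 * log π - log (Gamma ((n : ℝ) / 2 + 1 / 2)) := by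
  rw [log_kappa, Nat.cast_pred hn]
  congr 3
  ring

/-- Stirling's formula to leading order. -/
lemma tendsto_log_factorial :
    Tendsto (fun n : ℕ => log (n.factorial : ℝ) / n - log n) atTop (𝓝 (-1)) := by
  have hs : Tendsto (fun n : ℕ => log (Stirling.stirlingSeq n)) atTop (𝓝 (log √π)) :=
    Stirling.tendsto_stirlingSeq_sqrt_pi.log (by positivity)
  have hinv : Tendsto (fun n : ℕ => 1 / (n : ℝ)) atTop (𝓝 0) :=
    tendsto_one_div_atTop_nhds_zero_nat
  have hl : Tendsto (fun n : ℕ => log (n : ℝ) / n) atTop (𝓝 0) :=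
    (isLittleO_log_id_atTop.tendsto_div_nhds_zero).comp tendsto_natCast_atTop_atTop
  have key := (((hs.add_const (log 2 / 2)).mul hinv).add (hl.div_const 2)).add_const (-1)
  simp only [mul_zero, zero_div, add_zero, zero_add] at key
  refine key.congr' ?_
  filter_upwards [eventually_gt_atTop 0] with n hn
  have hn' : (0 : ℝ) < n := by positivity
  rw [Stirling.log_stirlingSeq_formula, log_mul two_ne_zero hn'.ne',
    log_div hn'.ne' (exp_pos 1).ne', log_exp]
  field_simp
  ring

/-- The exact expression for `(log V_n)/n`, arranged so that every summand converges. -/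
lemma log_volume_formula {n : ℕ} (hn : 0 < n) {g : ℝ} (hg : 0 < g) :
    1 / (n : ℝ) * log ((n.factorial : ℝ) * kappa n *
        (((n : ℝ) * kappa n) / (2 * g * kappa (n - 1))) ^ n) =
      (log (n.factorial : ℝ) / n - log n) / 2
        - (logGammaDiff n - log ((n : ℝ) / 2) / 2) * (1 + 1 / 2 * (1 / (n : ℝ)))
        - (log (n : ℝ) / n - log 2 * (1 / (n : ℝ))) / 4
        - log π / 4 * (1 / (n : ℝ)) - log (g / n) + log π := by
  have hn' : (0 : ℝ) < n := by positivity
  have hk := kappa_pos n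
  have hk' := kappa_pos (n - 1)
  have hf : (0 : ℝ) < n.factorial := by positivity
  rw [log_mul (by positivity) (by positivity), log_mul hf.ne' hk.ne', log_pow,
    log_div (by positivity) (by positivity), log_mul hn'.ne' hk.ne',
    log_mul (by positivity) hk'.ne', log_mul two_ne_zero hg.ne', log_kappa_pred hn, log_kappa,
    log_div hn'.ne' two_ne_zero, log_div hg.ne' hn'.ne']
  have hdup := log_duplication n
  have hb : log (Gamma ((n : ℝ) / 2 + 1 / 2)) =
      (log (n.factorial : ℝ) - n * log 2 + log π / 2 - logGammaDiff n) / 2 := by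
    unfold logGammaDiff; linarith
  have ha : log (Gamma ((n : ℝ) / 2 + 1)) =
      (log (n.factorial : ℝ) - n * log 2 + log π / 2 + logGammaDiff n) / 2 := by
    unfold logGammaDiff; linarith
  rw [ha, hb]
  field_simp
  ring

/-- Asymptotics and threshold for the expected volume of the zero cell
`V_n = n! κ_n (n κ_n / (2 γ_n κ_{n-1}))^n` when `γ_n ∼ ρ n`. -/
theorem zero_cell_volume_threshold (ρ : ℝ) (hρ : 0 < ρ)
    (γ : ℕ → ℝ) (hγpos : ∀ n, 0 < γ n)
    (hγ : Tendsto (fun n : ℕ => γ n / (n : ℝ)) atTop (nhds ρ))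
    (V : ℕ → ℝ)
    (hV : ∀ n : ℕ, V n =
      (n.factorial : ℝ) * kappa n *
        (((n : ℝ) * kappa n) / (2 * γ n * kappa (n - 1))) ^ n) :
    Tendsto (fun n : ℕ => (1 / (n : ℝ)) * Real.log (V n)) atTop
      (nhds (-Real.log ρ + Real.log Real.pi - 1 / 2)) ∧
    (ρ > Real.pi / Real.sqrt (Real.exp 1) → Tendsto V atTop (nhds 0)) ∧
    (ρ < Real.pi / Real.sqrt (Real.exp 1) → Tendsto V atTop atTop) := by
  have hVpos : ∀ᶠ n : ℕ in atTop, 0 < V n := by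
    filter_upwards [eventually_gt_atTop 0] with n hn
    have hn' : (0 : ℝ) < n := by positivity
    have := kappa_pos n
    have := kappa_pos (n - 1)
    have := hγpos n
    rw [hV]
    positivity
  have hinv : Tendsto (fun n : ℕ => 1 / (n : ℝ)) atTop (𝓝 0) :=
    tendsto_one_div_atTop_nhds_zero_nat
  have hl : Tendsto (fun n : ℕ => log (n : ℝ) / n) atTop (𝓝 0) :=
    (isLittleO_log_id_atTop.tendsto_div_nhds_zero).comp tendsto_natCast_atTop_atTop
  have hlim : Tendsto (fun n : ℕ => (1 / (n : ℝ)) * Real.log (V n)) atTop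
      (𝓝 (-Real.log ρ + Real.log Real.pi - 1 / 2)) := by
    have key := (((((tendsto_log_factorial.div_const 2).sub
      (tendsto_logGammaDiff_sub.mul ((hinv.const_mul (1 / 2)).const_add 1))).sub
      ((hl.sub (hinv.const_mul (log 2))).div_const 4)).sub
      (hinv.const_mul (log π / 4))).sub (hγ.log hρ.ne')).add_const (log π)
    have e : (-1 : ℝ) / 2 - 0 * (1 + 1 / 2 * 0) - (0 - log 2 * 0) / 4 - log π / 4 * 0
        - log ρ + log π = -log ρ + log π - 1 / 2 := by ring
    rw [e] at key
    refine key.congr' ?_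
    filter_upwards [eventually_gt_atTop 0] with n hn
    rw [hV, log_volume_formula hn (hγpos n)]
  have hexp : (fun n : ℕ => exp ((n : ℝ) * (1 / (n : ℝ) * log (V n)))) =ᶠ[atTop] V := by
    filter_upwards [eventually_gt_atTop 0, hVpos] with n hn hv
    have hn' : (n : ℝ) ≠ 0 := by positivity
    rw [← mul_assoc, mul_one_div_cancel hn', one_mul, exp_log hv]
  have hthr : log (π / √(exp 1)) = log π - 1 / 2 := by
    rw [log_div (by positivity) (by positivity), log_sqrt (exp_pos 1).le, log_exp]
  have hthrpos : 0 < π / √(exp 1) := by positivity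
  refine ⟨hlim, fun h => ?_, fun h => ?_⟩
  · have hlog := log_lt_log hthrpos h
    exact (tendsto_exp_atBot.comp (tendsto_natCast_atTop_atTop.atTop_mul_neg
      (by linarith) hlim)).congr' hexp
  · have hlog := log_lt_log hρ h
    exact (tendsto_exp_atTop.comp (tendsto_natCast_atTop_atTop.atTop_mul_pos
      (by linarith) hlim)).congr' hexp
end

section
/- Let n ≥ 1 and σ > 0, and let X be a random vector in ℝⁿ with the beta prime density f_{n,σ}. Then for every r > 0, the limit as m → ∞ of m·P(|X| ≥ m·r) equals 2σ·ω_n/(ω_{n+1}·r), where |X| is the Euclidean norm. -/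
/-!
In polar coordinates, `P(|X| ≥ R) = ω_n c ∫_R^∞ y^(n-1) (1 + y²/σ²)^(-(n+1)/2) dy`, where `c` is the
normalizing constant of the density (`measure_norm_ge_eq`). For `y > 0` the integrand equals
`y⁻² ψ(y)` with `ψ(y) = (1/y² + 1/σ²)^(-(n+1)/2)`, and `ψ` increases to `σ^(n+1)`. Since
`∫_R^∞ y⁻² dy = 1/R`, the integral lies between `ψ(R)/R` and `σ^(n+1)/R`
(`tailIntegral_lower`, `tailIntegral_upper`). With `R = m r`, multiplication by `m` squeezes the tail
to `ω_n c σ^(n+1)/r`, and `c σ^(n+1) = 2σ/ω_{n+1}` (`normalizingConst_mul_pow`).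
-/

open Filter Real MeasureTheory

/-- `ω n`, the surface area of the unit sphere `S^{n-1}` in `ℝⁿ`. -/
noncomputable def omegaSphere (n : ℕ) : ℝ := (n : ℝ) * kappa n

/-- The beta prime density `f_{n,σ}` on `ℝⁿ`. -/
noncomputable def betaPrimePDF (n : ℕ) (σ : ℝ) (x : EuclideanSpace ℝ (Fin n)) : ℝ :=
  (Real.Gamma (((n : ℝ) + 1) / 2) /
      (σ ^ n * Real.pi ^ ((n : ℝ) / 2) * Real.Gamma (1 / 2))) *
    (1 + ‖x‖ ^ 2 / σ ^ 2) ^ (-(((n : ℝ) + 1) / 2))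

/-- The factor `ψ(y) = (1/y² + 1/σ²)^(-(n+1)/2)` by which the radial density differs from `y⁻²`,
up to the normalizing constant. -/
noncomputable def radialFactor (n : ℕ) (σ y : ℝ) : ℝ :=
  (1 / y ^ 2 + 1 / σ ^ 2) ^ (-(((n : ℝ) + 1) / 2))

/-- The normalizing constant of the beta prime density. -/
noncomputable def betaPrimeConst (n : ℕ) (σ : ℝ) : ℝ :=
  Real.Gamma (((n : ℝ) + 1) / 2) / (σ ^ n * Real.pi ^ ((n : ℝ) / 2) * Real.Gamma (1 / 2))

lemma betaPrimeConst_pos (n : ℕ) {σ : ℝ} (hσ : 0 < σ) : 0 < betaPrimeConst n σ := by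
  have h1 : 0 < Real.Gamma (((n : ℝ) + 1) / 2) := Real.Gamma_pos_of_pos (by positivity)
  have h2 : 0 < Real.Gamma (1 / 2) := Real.Gamma_pos_of_pos (by positivity)
  unfold betaPrimeConst
  positivity

lemma normalizingConst_mul_pow (n : ℕ) {σ : ℝ} (hσ : 0 < σ) :
    betaPrimeConst n σ * σ ^ (n + 1) = 2 * σ / omegaSphere (n + 1) := by
  have h1 : 0 < Real.Gamma (((n : ℝ) + 1) / 2) := Real.Gamma_pos_of_pos (by positivity)
  have h3 : Real.Gamma (((n : ℝ) + 1) / 2 + 1)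
      = ((n : ℝ) + 1) / 2 * Real.Gamma (((n : ℝ) + 1) / 2) :=
    Real.Gamma_add_one (by positivity)
  have h4 : Real.pi ^ (((n : ℝ) + 1) / 2) = Real.pi ^ ((n : ℝ) / 2) * √Real.pi := by
    rw [Real.sqrt_eq_rpow, ← Real.rpow_add Real.pi_pos]
    ring_nf
  have h5 : 0 < √Real.pi := Real.sqrt_pos.2 Real.pi_pos
  have h6 : 0 < Real.pi ^ ((n : ℝ) / 2) := by positivity
  unfold betaPrimeConst omegaSphere kappa
  push_cast
  rw [h3, h4, Real.Gamma_one_half_eq, pow_succ]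
  field_simp

lemma radial_eq (n : ℕ) (hn : 1 ≤ n) {σ y : ℝ} (hσ : 0 < σ) (hy : 0 < y) :
    y ^ (n - 1) * (1 + y ^ 2 / σ ^ 2) ^ (-(((n : ℝ) + 1) / 2))
      = radialFactor n σ y * y ^ (-2 : ℝ) := by
  have h1 : 1 + y ^ 2 / σ ^ 2 = y ^ 2 * (1 / y ^ 2 + 1 / σ ^ 2) := by field_simp
  have h2 : (y ^ 2) ^ (-(((n : ℝ) + 1) / 2)) = y ^ (-((n : ℝ) + 1)) := by
    rw [← Real.rpow_natCast, ← Real.rpow_mul hy.le]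
    congr 1
    push_cast
    ring
  have h3 : y ^ (n - 1) = y ^ ((n : ℝ) - 1) := by
    rw [← Real.rpow_natCast]
    push_cast [hn]
    rfl
  rw [h1, Real.mul_rpow (by positivity) (by positivity), h2, h3, ← mul_assoc, ← Real.rpow_add hy,
    radialFactor, mul_comm]
  congr 2
  ring

lemma radialFactor_nonneg (n : ℕ) (σ y : ℝ) : 0 ≤ radialFactor n σ y := by
  unfold radialFactor
  positivity

lemma one_div_sq_rpow (n : ℕ) {σ : ℝ} (hσ : 0 < σ) :
    (1 / σ ^ 2) ^ (-(((n : ℝ) + 1) / 2)) = σ ^ (n + 1) := by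
  rw [one_div, Real.inv_rpow (by positivity), ← Real.rpow_neg (by positivity), neg_neg,
    ← Real.rpow_natCast, ← Real.rpow_mul hσ.le, ← Real.rpow_natCast]
  congr 1
  push_cast
  ring

lemma radialFactor_le (n : ℕ) {σ : ℝ} (hσ : 0 < σ) (y : ℝ) :
    radialFactor n σ y ≤ σ ^ (n + 1) := by
  rw [← one_div_sq_rpow n hσ]
  refine Real.rpow_le_rpow_of_nonpos (by positivity) ?_ ?_
  · have : 0 ≤ 1 / y ^ 2 := by positivity
    linarith
  · rw [neg_nonpos]
    positivity

lemma radialFactor_mono (n : ℕ) {σ x y : ℝ} (hσ : 0 < σ) (hx : 0 < x) (hxy : x ≤ y) :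
    radialFactor n σ x ≤ radialFactor n σ y := by
  have hy := hx.trans_le hxy
  refine Real.rpow_le_rpow_of_nonpos (by positivity) (by gcongr) ?_
  rw [neg_nonpos]
  positivity

lemma tendsto_radialFactor (n : ℕ) {σ : ℝ} (hσ : 0 < σ) :
    Tendsto (radialFactor n σ) atTop (nhds (σ ^ (n + 1))) := by
  rw [← one_div_sq_rpow n hσ]
  have h : Tendsto (fun y : ℝ => 1 / y ^ 2 + 1 / σ ^ 2) atTop (nhds (0 + 1 / σ ^ 2)) := by
    refine Tendsto.add_const _ ?_
    simp_rw [one_div]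
    exact (tendsto_pow_atTop two_ne_zero).inv_tendsto_atTop
  rw [zero_add] at h
  exact h.rpow_const (Or.inl (by positivity))

lemma integral_Ioi_rpow_neg_two {R : ℝ} (hR : 0 < R) :
    ∫ y in Set.Ioi R, y ^ (-2 : ℝ) = 1 / R := by
  rw [integral_Ioi_rpow_of_lt (by norm_num) hR]
  norm_num [Real.rpow_neg_one]

lemma integrableOn_tail (n : ℕ) {σ R : ℝ} (hσ : 0 < σ) (hR : 0 < R) :
    IntegrableOn (fun y => radialFactor n σ y * y ^ (-2 : ℝ)) (Set.Ioi R) := by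
  have h := integrableOn_Ioi_rpow_of_lt (a := -2) (by norm_num) hR
  refine Integrable.bdd_mul (c := σ ^ (n + 1)) h ?_ ?_
  · exact (by unfold radialFactor; fun_prop : Measurable (radialFactor n σ)).aestronglyMeasurable
  · refine ae_of_all _ fun y => ?_
    rw [Real.norm_of_nonneg (radialFactor_nonneg n σ y)]
    exact radialFactor_le n hσ y

lemma tailIntegral_upper (n : ℕ) {σ R : ℝ} (hσ : 0 < σ) (hR : 0 < R) :
    ∫ y in Set.Ioi R, radialFactor n σ y * y ^ (-2 : ℝ) ≤ σ ^ (n + 1) * (1 / R) := by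
  have h := integrableOn_Ioi_rpow_of_lt (a := -2) (by norm_num) hR
  rw [← integral_Ioi_rpow_neg_two hR, ← integral_const_mul]
  refine setIntegral_mono_on (integrableOn_tail n hσ hR) (h.const_mul _) measurableSet_Ioi
    fun y hy => ?_
  have hy' : 0 < y := hR.trans hy
  exact mul_le_mul_of_nonneg_right (radialFactor_le n hσ y) (by positivity)

lemma tailIntegral_lower (n : ℕ) {σ R : ℝ} (hσ : 0 < σ) (hR : 0 < R) :
    radialFactor n σ R * (1 / R) ≤ ∫ y in Set.Ioi R, radialFactor n σ y * y ^ (-2 : ℝ) := by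
  have h := integrableOn_Ioi_rpow_of_lt (a := -2) (by norm_num) hR
  rw [← integral_Ioi_rpow_neg_two hR, ← integral_const_mul]
  refine setIntegral_mono_on (h.const_mul _) (integrableOn_tail n hσ hR) measurableSet_Ioi
    fun y hy => ?_
  have hy' : 0 < y := hR.trans hy
  exact mul_le_mul_of_nonneg_right (radialFactor_mono n hσ hR (le_of_lt hy)) (by positivity)

lemma volume_real_unitBall (n : ℕ) (hn : 1 ≤ n) :
    volume.real (Metric.ball (0 : EuclideanSpace ℝ (Fin n)) 1) = kappa n := by
  have : Nonempty (Fin n) := ⟨⟨0, hn⟩⟩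
  have hG : 0 < Real.Gamma ((n : ℝ) / 2 + 1) := Real.Gamma_pos_of_pos (by positivity)
  rw [Measure.real, EuclideanSpace.volume_ball, Fintype.card_fin, ENNReal.ofReal_one, one_pow,
    one_mul, ENNReal.toReal_ofReal (by positivity), kappa, Real.sqrt_eq_rpow,
    ← Real.rpow_mul_natCast Real.pi_pos.le]
  congr 2
  ring

/-- The tail probability of the norm, in polar coordinates. -/
lemma measure_norm_ge_eq (n : ℕ) (hn : 1 ≤ n) {σ : ℝ} (hσ : 0 < σ)
    {Ω : Type*} [MeasurableSpace Ω] (P : Measure Ω)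
    (X : Ω → EuclideanSpace ℝ (Fin n)) (hX : Measurable X)
    (hlaw : P.map X = volume.withDensity fun x => ENNReal.ofReal (betaPrimePDF n σ x))
    {R : ℝ} (hR : 0 < R) :
    (P {ω | R ≤ ‖X ω‖}).toReal = omegaSphere n *
      (betaPrimeConst n σ * ∫ y in Set.Ioi R, radialFactor n σ y * y ^ (-2 : ℝ)) := by
  have : Nonempty (Fin n) := ⟨⟨0, hn⟩⟩
  have hc := betaPrimeConst_pos n hσ
  have hS : MeasurableSet {x : EuclideanSpace ℝ (Fin n) | R ≤ ‖x‖} :=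
    measurableSet_le measurable_const measurable_norm
  let g : ℝ → ℝ := fun y =>
    betaPrimeConst n σ * (1 + y ^ 2 / σ ^ 2) ^ (-(((n : ℝ) + 1) / 2))
  have hg0 : ∀ y, 0 ≤ g y := fun y => by positivity
  have hgm : Measurable g := by fun_prop
  have hpdf : ∀ x : EuclideanSpace ℝ (Fin n), betaPrimePDF n σ x = g ‖x‖ := fun x => rfl
  have e1 : P {ω | R ≤ ‖X ω‖} = ∫⁻ x in {x : EuclideanSpace ℝ (Fin n) | R ≤ ‖x‖},
      ENNReal.ofReal (g ‖x‖) := by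
    rw [← withDensity_apply _ hS]
    simp_rw [← hpdf]
    rw [← hlaw, Measure.map_apply hX hS]
    rfl
  have e2 : (P {ω | R ≤ ‖X ω‖}).toReal
      = ∫ x : EuclideanSpace ℝ (Fin n), (Set.Ici R).indicator g ‖x‖ := by
    rw [e1, ← integral_eq_lintegral_of_nonneg_ae (ae_of_all _ fun x => hg0 _)
      (hgm.comp measurable_norm).aestronglyMeasurable, ← integral_indicator hS]
    rfl
  rw [e2, integral_fun_norm_addHaar, finrank_euclideanSpace, Fintype.card_fin,
    volume_real_unitBall n hn, nsmul_eq_mul, smul_eq_mul, ← mul_assoc, omegaSphere,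
    ← integral_const_mul (betaPrimeConst n σ), ← integral_Ici_eq_integral_Ioi (x := R)]
  congr 1
  have e3 : ∀ y : ℝ, y ^ (n - 1) • (Set.Ici R).indicator g y
      = (Set.Ici R).indicator (fun y => y ^ (n - 1) * g y) y := fun y => by
    by_cases hy : y ∈ Set.Ici R <;> simp [hy]
  simp_rw [e3]
  rw [setIntegral_indicator measurableSet_Ici,
    Set.inter_eq_right.2 (Set.Ici_subset_Ioi.2 hR)]
  refine setIntegral_congr_fun measurableSet_Ici fun y hy => ?_
  change y ^ (n - 1) * (betaPrimeConst n σ * _) = _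
  rw [← radial_eq n hn hσ (hR.trans_le hy)]
  ring

/-- Heavy-tail behaviour of the norm of a beta prime random vector:
`m · P(|X| ≥ m r) → 2σ ω_n/(ω_{n+1} r)` as `m → ∞`. -/
theorem betaPrime_norm_tail (n : ℕ) (hn : 1 ≤ n) (σ : ℝ) (hσ : 0 < σ)
    {Ω : Type*} [MeasurableSpace Ω] (P : Measure Ω) [IsProbabilityMeasure P]
    (X : Ω → EuclideanSpace ℝ (Fin n)) (hX : Measurable X)
    (hlaw : P.map X = volume.withDensity fun x => ENNReal.ofReal (betaPrimePDF n σ x))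
    (r : ℝ) (hr : 0 < r) :
    Tendsto (fun m : ℕ => (m : ℝ) * (P {ω | (m : ℝ) * r ≤ ‖X ω‖}).toReal) atTop
      (nhds (2 * σ * omegaSphere n / (omegaSphere (n + 1) * r))) := by
  have hlim : 2 * σ * omegaSphere n / (omegaSphere (n + 1) * r)
      = omegaSphere n * (betaPrimeConst n σ * (σ ^ (n + 1) * (1 / r))) := by
    rw [← mul_assoc (betaPrimeConst n σ), normalizingConst_mul_pow n hσ]
    ring
  rw [hlim]
  have hI : Tendsto (fun m : ℕ => (m : ℝ) *
      ∫ y in Set.Ioi ((m : ℝ) * r), radialFactor n σ y * y ^ (-2 : ℝ)) atTop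
      (nhds (σ ^ (n + 1) * (1 / r))) := by
    have hlow : Tendsto (fun m : ℕ => radialFactor n σ ((m : ℝ) * r) * (1 / r)) atTop
        (nhds (σ ^ (n + 1) * (1 / r))) :=
      ((tendsto_radialFactor n hσ).comp
        (tendsto_natCast_atTop_atTop.atTop_mul_const hr)).mul_const _
    refine tendsto_of_tendsto_of_tendsto_of_le_of_le' hlow tendsto_const_nhds ?_ ?_
    all_goals
      filter_upwards [eventually_gt_atTop 0] with m hm
      have hm' : (0 : ℝ) < m := Nat.cast_pos.2 hm
      have hscale : ∀ a : ℝ, a * (1 / r) = m * (a * (1 / (m * r))) := fun a => by field_simp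
      rw [hscale]
    · exact mul_le_mul_of_nonneg_left (tailIntegral_lower n hσ (by positivity)) hm'.le
    · exact mul_le_mul_of_nonneg_left (tailIntegral_upper n hσ (by positivity)) hm'.le
  refine ((hI.const_mul (betaPrimeConst n σ)).const_mul (omegaSphere n)).congr' ?_
  filter_upwards [eventually_gt_atTop 0] with m hm
  have hm' : (0 : ℝ) < m := Nat.cast_pos.2 hm
  rw [measure_norm_ge_eq n hn hσ P X hX hlaw (mul_pos hm' hr)]
  ring
end

section
/- Let (b_n) be a sequence of positive reals with b_n/n → b as n → ∞. If b > 1, then (1/n)·ln Γ_u(n, b_n) → ln b − b + 1 as n → ∞. If 0 < b < 1, then (1/n)·ln Γ_ℓ(n, b_n) → ln b − b + 1 as n → ∞. -/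
/-!
Write `R = b_n` and `β = R / n`. Both regularized integrals are squeezed between bounds whose
logarithms are `n (log β - β + 1) + o(n)`.

* Upper bound (Chernoff tilting, `log_le_of_tilt`): on the domain of integration `S` (`t > R` with
  `R ≥ n`, or `t ≤ R` with `R ≤ n`) one has `(t - R) (1 - n / R) ≥ 0`, hence
  `exp (-t) ≤ exp (n - R) * exp (-(n / R) t)`. Extending the integral of the right-hand side to
  `(0, ∞)` gives exactly `exp (n - R) * β ^ n * Γ(n)`.
* Lower bound (`log_gammaU_ge`, `log_gammaL_ge`): bounding one factor of the integrand by its value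
  at `t = R` gives at least `R ^ (n - 1) * exp (-R)`, respectively `R ^ n * exp (-R) / n`. Dividing
  by `Γ(n) = (n - 1)!`, Stirling's upper bound for `n!` (`log_factorial_le`) finishes.

The passage to the limit is common to both cases (`tendsto_of_log_bounds`).
-/

open Filter Real

/-- The upper regularized incomplete gamma function `Γ_u(x, R)`. -/
noncomputable def gammaU (x R : ℝ) : ℝ :=
  (∫ t in Set.Ioi R, t ^ (x - 1) * Real.exp (-t)) / Real.Gamma x

/-- The lower regularized incomplete gamma function `Γ_ℓ(x, R)`. -/
noncomputable def gammaL (x R : ℝ) : ℝ :=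
  (∫ t in Set.Ioc (0 : ℝ) R, t ^ (x - 1) * Real.exp (-t)) / Real.Gamma x

open MeasureTheory Set

lemma integrableOn_gamma_tilt {a r : ℝ} (ha : 0 < a) (hr : 0 < r) :
    IntegrableOn (fun t : ℝ => t ^ (a - 1) * Real.exp (-(r * t))) (Ioi 0) := by
  -- The Bochner integral is known to be nonzero, so the function cannot be non-integrable.
  by_contra h
  have h1 := Real.integral_rpow_mul_exp_neg_mul_Ioi ha hr
  rw [integral_undef h] at h1
  have : 0 < (1 / r) ^ a * Real.Gamma a :=
    mul_pos (Real.rpow_pos_of_pos (by positivity) _) (Real.Gamma_pos_of_pos ha)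
  linarith

lemma integrableOn_gamma {a : ℝ} (ha : 0 < a) :
    IntegrableOn (fun t : ℝ => t ^ (a - 1) * Real.exp (-t)) (Ioi 0) := by
  simpa using integrableOn_gamma_tilt ha one_pos

/-- Chernoff bound: if `t - R` and `R - n` have the same sign throughout `S`, then the part of the
Gamma integral over `S` is at most `exp (n - R) * (R / n) ^ n * Γ(n)`. -/
lemma log_le_of_tilt {n : ℕ} (hn : 0 < n) {R : ℝ} (hR : 0 < R) {S : Set ℝ}
    (hS : MeasurableSet S) (hS0 : S ⊆ Ioi 0) (hsgn : ∀ t ∈ S, 0 ≤ (t - R) * (R - n))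
    (hpos : 0 < (∫ t in S, t ^ ((n : ℝ) - 1) * Real.exp (-t)) / Real.Gamma n) :
    Real.log ((∫ t in S, t ^ ((n : ℝ) - 1) * Real.exp (-t)) / Real.Gamma n) ≤
      n * Real.log (R / n) + n - R := by
  have hn' : (0 : ℝ) < n := by exact_mod_cast hn
  have hr : 0 < (n : ℝ) / R := by positivity
  have hG := Real.Gamma_pos_of_pos hn'
  have hint := (integrableOn_gamma_tilt hn' hr).const_mul (Real.exp (n - R))
  have h1 : ∫ t in S, t ^ ((n : ℝ) - 1) * Real.exp (-t) ≤
      Real.exp (n - R) * ((R / n) ^ (n : ℝ) * Real.Gamma n) := by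
    calc ∫ t in S, t ^ ((n : ℝ) - 1) * Real.exp (-t)
        ≤ ∫ t in S, Real.exp (n - R) * (t ^ ((n : ℝ) - 1) * Real.exp (-(n / R * t))) := by
          refine setIntegral_mono_on ((integrableOn_gamma hn').mono_set hS0)
            (IntegrableOn.mono_set hint hS0) hS fun t ht => ?_
          have ht0 : 0 < t := hS0 ht
          have key : -t ≤ (n - R) + -(n / R * t) := by
            have : (n - R) + -(n / R * t) - -t = (t - R) * (R - n) / R := by
              field_simp
              ring
            have := div_nonneg (hsgn t ht) hR.le
            linarith
          calc t ^ ((n : ℝ) - 1) * Real.exp (-t)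
              ≤ t ^ ((n : ℝ) - 1) * Real.exp ((n - R) + -(n / R * t)) := by gcongr
            _ = _ := by rw [Real.exp_add]; ring
      _ ≤ ∫ t in Ioi 0, Real.exp (n - R) * (t ^ ((n : ℝ) - 1) * Real.exp (-(n / R * t))) := by
          refine setIntegral_mono_set hint ?_ hS0.eventuallyLE
          filter_upwards [ae_restrict_mem measurableSet_Ioi] with t ht
          have : (0 : ℝ) < t := ht
          simp only [Pi.zero_apply]
          positivity
      _ = _ := by
          rw [integral_const_mul, Real.integral_rpow_mul_exp_neg_mul_Ioi hn' hr, one_div_div]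
  have h2 : (∫ t in S, t ^ ((n : ℝ) - 1) * Real.exp (-t)) / Real.Gamma n ≤
      Real.exp (n - R) * (R / n) ^ (n : ℝ) := by
    rw [div_le_iff₀ hG]
    linarith
  refine (Real.log_le_log hpos h2).trans_eq ?_
  rw [Real.log_mul (by positivity) (by positivity), Real.log_exp,
    Real.log_rpow (by positivity)]
  ring

lemma gammaU_ge {n : ℕ} (hn : 0 < n) {R : ℝ} (hR : 0 < R) :
    R ^ ((n : ℝ) - 1) * Real.exp (-R) / Real.Gamma n ≤ gammaU n R := by
  have hn' : (0 : ℝ) < n := by exact_mod_cast hn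
  have hn1 : (1 : ℝ) ≤ n := by exact_mod_cast hn
  have hG := Real.Gamma_pos_of_pos hn'
  unfold gammaU
  gcongr
  rw [← integral_exp_neg_Ioi R, ← integral_const_mul]
  refine setIntegral_mono_on ((integrableOn_exp_neg_Ioi R).const_mul _)
    ((integrableOn_gamma hn').mono_set (Ioi_subset_Ioi hR.le)) measurableSet_Ioi fun t ht => ?_
  have : R ≤ t := le_of_lt ht
  have : 0 ≤ (n : ℝ) - 1 := by linarith
  gcongr

lemma gammaL_ge {n : ℕ} (hn : 0 < n) {R : ℝ} (hR : 0 < R) :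
    R ^ (n : ℝ) / n * Real.exp (-R) / Real.Gamma n ≤ gammaL n R := by
  have hn' : (0 : ℝ) < n := by exact_mod_cast hn
  have hn1 : (1 : ℝ) ≤ n := by exact_mod_cast hn
  have hG := Real.Gamma_pos_of_pos hn'
  have hpow : IntervalIntegrable (fun t : ℝ => t ^ ((n : ℝ) - 1)) volume 0 R :=
    intervalIntegral.intervalIntegrable_rpow' (by linarith)
  have h1 : ∫ t in Ioc 0 R, t ^ ((n : ℝ) - 1) = R ^ (n : ℝ) / n := by
    rw [← intervalIntegral.integral_of_le hR.le, integral_rpow (Or.inl (by linarith))]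
    simp [hn.ne']
  unfold gammaL
  gcongr
  rw [← h1, ← integral_mul_const]
  refine setIntegral_mono_on (hpow.1.mul_const _)
    ((integrableOn_gamma hn').mono_set Ioc_subset_Ioi_self) measurableSet_Ioc fun t ht => ?_
  have : t ≤ R := ht.2
  have : 0 < t := ht.1
  gcongr

lemma log_Gamma_nat {n : ℕ} (hn : 0 < n) :
    Real.log (Real.Gamma n) = Real.log (n.factorial : ℝ) - Real.log n := by
  have hn' : (0 : ℝ) < n := by exact_mod_cast hn
  rw [← Real.Gamma_nat_eq_factorial, Real.Gamma_add_one hn'.ne',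
    Real.log_mul hn'.ne' (Real.Gamma_pos_of_pos hn').ne']
  ring

lemma gammaU_pos {n : ℕ} (hn : 0 < n) {R : ℝ} (hR : 0 < R) : 0 < gammaU n R := by
  have hG : 0 < Real.Gamma n := Real.Gamma_pos_of_pos (by exact_mod_cast hn)
  exact lt_of_lt_of_le (by positivity) (gammaU_ge hn hR)

lemma gammaL_pos {n : ℕ} (hn : 0 < n) {R : ℝ} (hR : 0 < R) : 0 < gammaL n R := by
  have hG : 0 < Real.Gamma n := Real.Gamma_pos_of_pos (by exact_mod_cast hn)
  exact lt_of_lt_of_le (by positivity) (gammaL_ge hn hR)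

/-- The absolute value is wasteful, but gives `gammaU` and `gammaL` a lower bound of the same
shape. -/
lemma log_gammaU_ge {n : ℕ} (hn : 0 < n) {R : ℝ} (hR : 0 < R) :
    n * Real.log R - R - Real.log (n.factorial : ℝ) - |Real.log (R / n)| ≤
      Real.log (gammaU n R) := by
  have hn' : (0 : ℝ) < n := by exact_mod_cast hn
  have hG := Real.Gamma_pos_of_pos hn'
  refine le_trans ?_ (Real.log_le_log (by positivity) (gammaU_ge hn hR))
  rw [Real.log_div (by positivity) hG.ne', Real.log_mul (by positivity) (by positivity),
    Real.log_exp, Real.log_rpow hR, log_Gamma_nat hn]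
  have h1 := le_abs_self (Real.log (R / n))
  have h2 := Real.log_div hR.ne' hn'.ne'
  linarith

lemma log_gammaL_ge {n : ℕ} (hn : 0 < n) {R : ℝ} (hR : 0 < R) :
    n * Real.log R - R - Real.log (n.factorial : ℝ) - |Real.log (R / n)| ≤
      Real.log (gammaL n R) := by
  have hn' : (0 : ℝ) < n := by exact_mod_cast hn
  have hG := Real.Gamma_pos_of_pos hn'
  refine le_trans ?_ (Real.log_le_log (by positivity) (gammaL_ge hn hR))
  rw [Real.log_div (by positivity) hG.ne', Real.log_mul (by positivity) (by positivity),
    Real.log_div (Real.rpow_pos_of_pos hR n).ne' hn'.ne', Real.log_exp, Real.log_rpow hR, log_Gamma_nat hn]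
  have h1 := abs_nonneg (Real.log (R / n))
  linarith

/-- Stirling's upper bound `n! ≤ e √n (n / e) ^ n`, from the monotonicity of `stirlingSeq`. -/
lemma log_factorial_le {n : ℕ} (hn : 0 < n) :
    Real.log (n.factorial : ℝ) ≤ n * Real.log n - n + 1 + Real.log n / 2 := by
  have hn' : (0 : ℝ) < n := by exact_mod_cast hn
  obtain ⟨m, rfl⟩ : ∃ m, n = m + 1 := ⟨n - 1, by omega⟩
  have h := Stirling.log_stirlingSeq'_antitone (Nat.zero_le m)
  simp only [Function.comp_apply, Nat.succ_eq_add_one, zero_add] at h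
  rw [Stirling.log_stirlingSeq_formula, Stirling.log_stirlingSeq_formula,
    Real.log_div hn'.ne' (Real.exp_pos 1).ne', Real.log_mul two_ne_zero hn'.ne'] at h
  simp at h
  push_cast
  linarith

/-- Squeeze argument shared by both cases. -/
lemma tendsto_of_log_bounds {b : ℝ} {R G : ℕ → ℝ} (hb0 : 0 < b) (hR : ∀ n, 0 < R n)
    (hb : Tendsto (fun n : ℕ => R n / (n : ℝ)) atTop (nhds b))
    (hup : ∀ᶠ n : ℕ in atTop, Real.log (G n) ≤ n * Real.log (R n / n) + n - R n)
    (hlo : ∀ᶠ n : ℕ in atTop,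
      n * Real.log (R n) - R n - Real.log (n.factorial : ℝ) - |Real.log (R n / n)| ≤
        Real.log (G n)) :
    Tendsto (fun n : ℕ => (1 / (n : ℝ)) * Real.log (G n)) atTop
      (nhds (Real.log b - b + 1)) := by
  have hlog := hb.log hb0.ne'
  have hmain := (hlog.sub hb).add_const 1
  have hinv : Tendsto (fun n : ℕ => 1 / (n : ℝ)) atTop (nhds 0) :=
    tendsto_one_div_atTop_nhds_zero_nat
  have hlogn : Tendsto (fun n : ℕ => Real.log n / (n : ℝ)) atTop (nhds 0) := by
    have := Real.isLittleO_log_id_atTop.tendsto_div_nhds_zero.comp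
      (tendsto_natCast_atTop_atTop (R := ℝ))
    simpa [Function.comp_def] using this
  have herr := (hinv.mul (hlog.abs.add_const 1)).add (hlogn.div_const 2)
  have hlow := hmain.sub herr
  rw [zero_mul, zero_div, add_zero, sub_zero] at hlow
  refine tendsto_of_tendsto_of_tendsto_of_le_of_le' hlow hmain ?_ ?_
  · filter_upwards [hlo, eventually_gt_atTop 0] with n h hn
    have hn' : (0 : ℝ) < n := by exact_mod_cast hn
    have hf := log_factorial_le hn
    have hd := Real.log_div (hR n).ne' hn'.ne'
    rw [one_div_mul_eq_div (n : ℝ) (Real.log (G n)), le_div_iff₀ hn']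
    have e : (Real.log (R n / n) - R n / n + 1 -
        (1 / (n : ℝ) * (|Real.log (R n / n)| + 1) + Real.log n / n / 2)) * n =
        n * Real.log (R n / n) - R n + n - (|Real.log (R n / n)| + 1) - Real.log n / 2 := by
      field_simp
      ring
    have e2 : n * Real.log (R n / n) = n * Real.log (R n) - n * Real.log n := by
      rw [hd]; ring
    rw [e, e2]
    linarith
  · filter_upwards [hup, eventually_gt_atTop 0] with n h hn
    have hn' : (0 : ℝ) < n := by exact_mod_cast hn
    rw [one_div_mul_eq_div, div_le_iff₀ hn']
    have e : (Real.log (R n / n) - R n / n + 1) * n =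
        n * Real.log (R n / n) + n - R n := by
      field_simp
      ring
    rw [e]
    exact h

/-- Laplace-method asymptotics of the regularized incomplete gamma functions:
if `b_n / n → b` then `(1/n) ln Γ_u(n, b_n) → ln b − b + 1` when `b > 1`, and
`(1/n) ln Γ_ℓ(n, b_n) → ln b − b + 1` when `0 < b < 1`. -/
theorem incompleteGamma_laplace_asymptotics (b : ℝ) (bSeq : ℕ → ℝ)
    (hbpos : ∀ n, 0 < bSeq n)
    (hb : Tendsto (fun n : ℕ => bSeq n / (n : ℝ)) atTop (nhds b)) :
    (1 < b →
      Tendsto (fun n : ℕ => (1 / (n : ℝ)) * Real.log (gammaU n (bSeq n))) atTop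
        (nhds (Real.log b - b + 1))) ∧
    (0 < b → b < 1 →
      Tendsto (fun n : ℕ => (1 / (n : ℝ)) * Real.log (gammaL n (bSeq n))) atTop
        (nhds (Real.log b - b + 1))) := by
  constructor
  · intro h1
    refine tendsto_of_log_bounds (one_pos.trans h1) hbpos hb ?_ ?_
    · filter_upwards [hb.eventually_const_lt h1, eventually_gt_atTop 0] with n h hn
      have hn' : (0 : ℝ) < n := by exact_mod_cast hn
      rw [lt_div_iff₀ hn', one_mul] at h
      refine log_le_of_tilt hn (hbpos n) measurableSet_Ioi (Ioi_subset_Ioi (hbpos n).le)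
        (fun t ht => mul_nonneg (sub_nonneg.2 (le_of_lt ht)) (by linarith))
        (gammaU_pos hn (hbpos n))
    · filter_upwards [eventually_gt_atTop 0] with n hn using log_gammaU_ge hn (hbpos n)
  · intro h0 h1
    refine tendsto_of_log_bounds h0 hbpos hb ?_ ?_
    · filter_upwards [hb.eventually_lt_const h1, eventually_gt_atTop 0] with n h hn
      have hn' : (0 : ℝ) < n := by exact_mod_cast hn
      rw [div_lt_iff₀ hn', one_mul] at h
      refine log_le_of_tilt hn (hbpos n) measurableSet_Ioc Ioc_subset_Ioi_self
        (fun t ht => mul_nonneg_of_nonpos_of_nonpos (sub_nonpos.2 ht.2) (by linarith))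
        (gammaL_pos hn (hbpos n))
    · filter_upwards [eventually_gt_atTop 0] with n hn using log_gammaL_ge hn (hbpos n)
end

section
/- Fix an integer n ≥ 1, σ > 0 and r > 0. Then the limit as m → ∞ of m^n · ∫_{−m/r}^{m/r} (1 + t²/σ²)^(−(n+1)/2) · ((σπ)^(−1) ∫_{−∞}^{t} (1 + s²/σ²)^(−1) ds)^(m−n) dt equals σ·πⁿ·Γ(n)·Γ_u(n, σr/π). -/
/-!
The inner integral is a Cauchy distribution function, equal to `σ (arctan (t / σ) + π / 2)`.
Substituting `t = σ tan θ` turns the weight and the Jacobian into `σ cos θ ^ (n - 1)`, and the base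
of the power into `1 / 2 + θ / π`. Measuring the angle from the right endpoint on the scale `1 / m`,
that is `θ = π / 2 - π y / m`, the quantity becomes
`σ π ^ n ∫ ((m / π) sin (π y / m)) ^ (n - 1) (1 - y / m) ^ (m - n) dy`
over `y` between `c m` and `m - c m`, where `c m = m arctan (σ r / m) / π`
(`integral_substitution`).

As `m → ∞`, `c m → σ r / π` and the integrand tends to `y ^ (n - 1) exp (-y)`
(`tendsto_integrand`); for `m ≥ 2 n` it is dominated by `y ^ (n - 1) exp (-y / 2)`
(`integrand_bound`). Dominated convergence (`tendsto_truncated_integral`) gives the incomplete gamma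
integral. In the lemmas `n = k + 1`.
-/

open Filter Real MeasureTheory

/-- `σ⁻¹ π⁻¹` times this integral is the distribution function of the Cauchy law of scale `σ`. -/
lemma cauchy_cdf {σ : ℝ} (hσ : 0 < σ) (t : ℝ) :
    ∫ s in Set.Iic t, (1 + s ^ 2 / σ ^ 2)⁻¹ = σ * (arctan (t / σ) + π / 2) := by
  have hd : ∀ x ∈ Set.Iic t,
      HasDerivAt (fun s => σ * arctan (s / σ)) ((1 + x ^ 2 / σ ^ 2)⁻¹) x := by
    intro x _
    have h : HasDerivAt (fun s => σ * arctan (s / σ)) (σ * (1 / (1 + (x / σ) ^ 2) * (1 / σ))) x :=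
      (((hasDerivAt_id x).div_const σ).arctan).const_mul σ
    refine h.congr_deriv ?_
    rw [div_pow]
    field_simp
  have hi : Integrable (fun s : ℝ => (1 + s ^ 2 / σ ^ 2)⁻¹) := by
    simpa only [div_pow] using integrable_inv_one_add_sq.comp_div hσ.ne'
  have hl : Tendsto (fun s => σ * arctan (s / σ)) atBot (nhds (σ * (-(π / 2)))) :=
    ((tendsto_nhds_of_tendsto_nhdsWithin tendsto_arctan_atBot).comp
      (tendsto_id.atBot_div_const hσ)).const_mul σ
  rw [integral_Iic_of_hasDerivAt_of_tendsto' hd hi.integrableOn hl]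
  ring

lemma weight_tan {n : ℕ} {σ θ : ℝ} (hσ : 0 < σ) (hc : 0 < cos θ) :
    (1 + (σ * tan θ) ^ 2 / σ ^ 2) ^ (-(((n : ℝ) + 1) / 2)) = cos θ ^ (n + 1) := by
  rw [mul_pow, mul_div_cancel_left₀ _ (by positivity), rpow_neg (by positivity),
    ← inv_rpow (by positivity), inv_one_add_tan_sq hc.ne', ← rpow_natCast (cos θ) 2,
    ← rpow_mul hc.le, ← rpow_natCast]
  congr 1
  push_cast
  ring

lemma tendsto_nat_mul_of_hasDerivAt {f : ℝ → ℝ} (hf : HasDerivAt f 1 0) (h0 : f 0 = 0) (c : ℝ) :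
    Tendsto (fun m : ℕ => (m : ℝ) * f (c / m)) atTop (nhds c) := by
  have hg : HasDerivAt (fun x => f (c * x)) c 0 := by
    have h1 : HasDerivAt (fun x : ℝ => c * x) c 0 := by
      simpa using (hasDerivAt_id (0 : ℝ)).const_mul c
    have h2 : HasDerivAt f 1 (c * 0) := by simpa using hf
    simpa [Function.comp_def] using HasDerivAt.comp (0 : ℝ) h2 h1
  have hm : Tendsto (fun m : ℕ => (m : ℝ)⁻¹) atTop (nhdsWithin 0 (Set.Ioi 0)) :=
    tendsto_inv_atTop_nhdsGT_zero.comp tendsto_natCast_atTop_atTop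
  refine (hg.tendsto_slope_zero_right.comp hm).congr fun m => ?_
  simp [h0, div_eq_mul_inv]

/-- The substitutions `t = σ tan θ` and `θ = π / 2 - π y / m`. The endpoint `t = m / r` corresponds
to `y = m arctan (σ r / m) / π`, and `t = -m / r` to its reflection in `m / 2`. -/
lemma integral_substitution {k m : ℕ} {σ r : ℝ} (hσ : 0 < σ) (hr : 0 < r) (hm : k + 1 ≤ m) :
    (m : ℝ) ^ (k + 1) * ∫ t in (-(m / r : ℝ))..(m / r : ℝ),
        (1 + t ^ 2 / σ ^ 2) ^ (-((((k + 1 : ℕ) : ℝ) + 1) / 2)) *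
          ((σ * π)⁻¹ * ∫ s in Set.Iic t, (1 + s ^ 2 / σ ^ 2)⁻¹) ^ (m - (k + 1)) =
      σ * π ^ (k + 1) * ∫ y in (m * arctan (σ * r / m) / π)..
          (m - m * arctan (σ * r / m) / π),
        (m * sin (π * y / m) / π) ^ k * (1 - y / m) ^ (m - (k + 1)) := by
  have hm0 : (0 : ℝ) < m := by exact_mod_cast (by omega : 0 < m)
  have hpi := pi_pos
  set b := arctan (m / r / σ) with hb
  have hinv : arctan (σ * r / m) = π / 2 - b := by
    rw [hb, ← arctan_inv_of_pos (by positivity)]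
    congr 1
    field_simp
  have htan : tan b = m / r / σ := tan_arctan _
  have hb1 : b < π / 2 := arctan_lt_pi_div_two _
  have hb0 : 0 < b := by rw [hb, ← arctan_zero]; exact arctan_strictMono (by positivity)
  have hcos : ∀ θ ∈ Set.uIcc (-b) b, 0 < cos θ := by
    intro θ hθ
    rw [Set.uIcc_of_le (by linarith)] at hθ
    exact cos_pos_of_mem_Ioo ⟨by linarith [hθ.1], by linarith [hθ.2]⟩
  simp_rw [cauchy_cdf hσ]
  set g : ℝ → ℝ := fun t => (1 + t ^ 2 / σ ^ 2) ^ (-((((k + 1 : ℕ) : ℝ) + 1) / 2)) *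
          ((σ * π)⁻¹ * (σ * (arctan (t / σ) + π / 2))) ^ (m - (k + 1)) with hg
  have hgc : Continuous g := by
    refine Continuous.mul (Continuous.rpow_const (by fun_prop) fun t => Or.inl ?_) ?_
    · positivity
    · exact (continuous_const.mul (continuous_const.mul
        ((continuous_arctan.comp (continuous_id.div_const σ)).add continuous_const))).pow _
  have h1 := intervalIntegral.integral_comp_mul_deriv (a := -b) (b := b)
    (f := fun θ => σ * tan θ) (f' := fun θ => σ * (1 / cos θ ^ 2)) (g := g)
    (fun θ hθ => (hasDerivAt_tan (hcos θ hθ).ne').const_mul σ)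
    (continuousOn_const.mul (continuousOn_const.div (by fun_prop)
      fun θ hθ => (pow_pos (hcos θ hθ) 2).ne')) hgc
  have e1 : σ * tan b = m / r := by rw [htan]; field_simp
  have e2 : σ * tan (-b) = -(m / r) := by rw [tan_neg, ← e1]; ring
  simp only [e1, e2] at h1
  rw [← h1]
  have h2 : ∫ θ in (-b)..b, (g ∘ fun θ => σ * tan θ) θ * (σ * (1 / cos θ ^ 2)) =
      ∫ θ in (-b)..b, σ * (cos θ ^ k * (1 / 2 + θ / π) ^ (m - (k + 1))) := by
    refine intervalIntegral.integral_congr fun θ hθ => ?_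
    have hc := hcos θ hθ
    rw [Set.uIcc_of_le (by linarith)] at hθ
    have ha : arctan (tan θ) = θ := arctan_tan (by linarith [hθ.1]) (by linarith [hθ.2])
    have hF : (σ * π)⁻¹ * (σ * (θ + π / 2)) = 1 / 2 + θ / π := by field_simp; ring
    simp only [hg, Function.comp, weight_tan hσ hc]
    rw [mul_div_cancel_left₀ _ hσ.ne', ha, hF]
    field_simp
    ring
  have h3 := intervalIntegral.smul_integral_comp_sub_mul
    (a := m * (π / 2 - b) / π) (b := m - m * (π / 2 - b) / π)
    (fun θ => σ * (cos θ ^ k * (1 / 2 + θ / π) ^ (m - (k + 1)))) (π / m) (π / 2)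
  have e3 : π / 2 - π / m * (m * (π / 2 - b) / π) = b := by field_simp; ring
  have e4 : π / 2 - π / m * (m - m * (π / 2 - b) / π) = -b := by field_simp; ring
  rw [e3, e4] at h3
  rw [h2, ← h3, hinv, smul_eq_mul, ← mul_assoc, ← intervalIntegral.integral_const_mul,
    ← intervalIntegral.integral_const_mul]
  refine intervalIntegral.integral_congr fun y _ => ?_
  have e5 : 1 / 2 + (π / 2 - π / m * y) / π = 1 - y / m := by field_simp; ring
  simp only [e5, cos_pi_div_two_sub, div_pow, mul_pow, pow_succ]
  rw [show π / m * y = π * y / m by ring]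
  field_simp

lemma tendsto_integrand (k : ℕ) (y : ℝ) :
    Tendsto (fun m : ℕ => (m * sin (π * y / m) / π) ^ k * (1 - y / m) ^ (m - (k + 1)))
      atTop (nhds (y ^ k * exp (-y))) := by
  have hpi := pi_pos
  have h1 : Tendsto (fun m : ℕ => (m * sin (π * y / m) / π)) atTop (nhds y) := by
    have := (tendsto_nat_mul_of_hasDerivAt (by simpa using hasDerivAt_sin 0) sin_zero
      (π * y)).div_const π
    rwa [mul_div_cancel_left₀ _ hpi.ne'] at this
  refine (h1.pow k).mul ?_
  have h2 : Tendsto (fun m : ℕ => 1 - y / (m : ℝ)) atTop (nhds 1) := by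
    simpa using (tendsto_const_div_atTop_nhds_zero_nat y).const_sub 1
  have h3 : Tendsto (fun m : ℕ => (1 - y / (m : ℝ)) ^ m) atTop (nhds (exp (-y))) := by
    simpa [neg_div, sub_eq_add_neg] using tendsto_one_add_div_pow_exp (-y)
  have h4 := h3.div (h2.pow (k + 1)) (by simp)
  rw [one_pow, div_one] at h4
  refine h4.congr' ?_
  filter_upwards [h2.eventually_ne one_ne_zero, eventually_ge_atTop (k + 1)] with m hm hk
  simp only [Pi.div_apply]
  rw [div_eq_iff (pow_ne_zero _ hm), ← pow_add, Nat.sub_add_cancel hk]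

/-- The majorant, independent of `m`: `sin u ≤ u` bounds the first factor, and
`1 - u ≤ exp (-u)` the second, since `(m - (k + 1)) / m ≥ 1 / 2`. -/
lemma integrand_bound {k m : ℕ} (hm : 2 * (k + 1) ≤ m) {y : ℝ} (h0 : 0 < y) (h1 : y ≤ m) :
    ‖(m * sin (π * y / m) / π) ^ k * (1 - y / m) ^ (m - (k + 1))‖ ≤
      y ^ k * exp (-(1 / 2) * y) := by
  have hpi := pi_pos
  have hm0 : (0 : ℝ) < m := by exact_mod_cast (by omega : 0 < m)
  rw [norm_mul, norm_pow, norm_pow, norm_eq_abs, norm_eq_abs]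
  have hs : |m * sin (π * y / m) / π| ≤ y := by
    rw [abs_div, abs_mul, abs_of_pos hm0, abs_of_pos hpi, div_le_iff₀ hpi]
    calc (m : ℝ) * |sin (π * y / m)| ≤ m * |π * y / m| := mul_le_mul_of_nonneg_left abs_sin_le_abs hm0.le
      _ = y * π := by rw [abs_of_pos (by positivity)]; field_simp
  have hy : y / m ≤ 1 := (div_le_one hm0).2 h1
  have he : |1 - y / m| ≤ exp (-(y / m)) := by
    rw [abs_of_nonneg (by linarith)]
    exact one_sub_le_exp_neg _
  gcongr
  calc |1 - y / m| ^ (m - (k + 1)) ≤ exp (-(y / m)) ^ (m - (k + 1)) := by gcongr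
    _ ≤ exp (-(1 / 2) * y) := by
      rw [← exp_nat_mul, exp_le_exp, Nat.cast_sub (by omega)]
      have h2 : (2 : ℝ) * ((k + 1 : ℕ) : ℝ) ≤ m := by exact_mod_cast hm
      have h3 : (m : ℝ) / 2 * (y / m) ≤ (m - ((k + 1 : ℕ) : ℝ)) * (y / m) := by
        gcongr; linarith
      have h4 : (m : ℝ) / 2 * (y / m) = y / 2 := by field_simp
      linarith

/-- Dominated convergence on `ℝ`, with the moving domain of integration written as an indicator. -/
lemma tendsto_truncated_integral (k : ℕ) {R : ℝ} {c : ℕ → ℝ}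
    (hc0 : ∀ᶠ m in atTop, 0 ≤ c m) (hc1 : ∀ᶠ m in atTop, c m ≤ m - c m)
    (hc : Tendsto c atTop (nhds R)) :
    Tendsto (fun m : ℕ => ∫ y in (c m)..(m - c m),
        (m * sin (π * y / m) / π) ^ k * (1 - y / m) ^ (m - (k + 1)))
      atTop (nhds (∫ y in Set.Ioi R, y ^ k * exp (-y))) := by
  have hpi := pi_pos
  have key : Tendsto (fun m : ℕ => ∫ y, (Set.Ioc (c m) (m - c m)).indicator
        (fun y => (m * sin (π * y / m) / π) ^ k * (1 - y / m) ^ (m - (k + 1))) y)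
      atTop (nhds (∫ y, (Set.Ioi R).indicator (fun y => y ^ k * exp (-y)) y)) := by
    refine tendsto_integral_filter_of_dominated_convergence
      ((Set.Ioi 0).indicator fun y => y ^ k * exp (-(1 / 2) * y)) ?_ ?_ ?_ ?_
    · refine Eventually.of_forall fun m => ?_
      exact (Continuous.aestronglyMeasurable (by fun_prop)).indicator measurableSet_Ioc
    · filter_upwards [hc0, eventually_ge_atTop (2 * (k + 1))] with m h0 hm
      refine Eventually.of_forall fun y => ?_
      by_cases hy : y ∈ Set.Ioc (c m) (m - c m)
      · have hy0 : 0 < y := h0.trans_lt hy.1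
        rw [Set.indicator_of_mem hy, Set.indicator_of_mem (Set.mem_Ioi.2 hy0)]
        exact integrand_bound hm hy0 (by linarith [hy.2])
      · rw [Set.indicator_of_notMem hy, norm_zero]
        exact Set.indicator_nonneg (fun y hy => by have : 0 < y := hy; positivity) y
    · rw [integrable_indicator_iff measurableSet_Ioi]
      have := integrableOn_rpow_mul_exp_neg_mul_rpow (p := 1) (s := k) (b := 1 / 2)
        (by have : (0 : ℝ) ≤ k := by positivity
            linarith) one_pos (by norm_num)
      simpa only [rpow_natCast, rpow_one] using this
    -- At `y = R` the indicators need not converge, so this point is discarded.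
    · have hne : ∀ᵐ y : ℝ, y ≠ R := by simp [ae_iff, measure_singleton]
      filter_upwards [hne] with y hy
      rcases lt_or_gt_of_ne hy with hlt | hgt
      · rw [Set.indicator_of_notMem (by simpa using hlt.le)]
        refine tendsto_const_nhds.congr' ?_
        filter_upwards [hc.eventually (lt_mem_nhds hlt)] with m hm
        rw [Set.indicator_of_notMem fun h => absurd h.1 hm.le.not_gt]
      · rw [Set.indicator_of_mem (by simpa using hgt)]
        refine (tendsto_integrand k y).congr' ?_
        have hinf : Tendsto (fun m : ℕ => (m : ℝ) - c m) atTop atTop := by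
          simpa only [sub_eq_add_neg] using
            tendsto_natCast_atTop_atTop.atTop_add hc.neg
        filter_upwards [hc.eventually (gt_mem_nhds hgt), hinf.eventually_ge_atTop y]
          with m h1 h2
        rw [Set.indicator_of_mem (Set.mem_Ioc.2 ⟨h1, h2⟩)]
  rw [integral_indicator measurableSet_Ioi] at key
  refine key.congr' ?_
  filter_upwards [hc1] with m hm
  rw [integral_indicator measurableSet_Ioc, intervalIntegral.integral_of_le hm]

/-- Asymptotics of the facet-probability integral for convex hulls of beta prime points. -/
theorem facet_integral_asymptotics (n : ℕ) (hn : 1 ≤ n) (σ r : ℝ) (hσ : 0 < σ) (hr : 0 < r) :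
    Tendsto (fun m : ℕ =>
        (m : ℝ) ^ n *
          ∫ t in (-(m / r : ℝ))..(m / r : ℝ),
            (1 + t ^ 2 / σ ^ 2) ^ (-(((n : ℝ) + 1) / 2)) *
              ((σ * Real.pi)⁻¹ * ∫ s in Set.Iic t, (1 + s ^ 2 / σ ^ 2)⁻¹) ^ (m - n))
      atTop
      (nhds (σ * Real.pi ^ n * Real.Gamma n * gammaU n (σ * r / Real.pi))) := by
  obtain ⟨k, rfl⟩ : ∃ k, n = k + 1 := ⟨n - 1, by omega⟩
  have hpi := pi_pos
  have hR : 0 < σ * r / π := by positivity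
  have hc : Tendsto (fun m : ℕ => (m : ℝ) * arctan (σ * r / m) / π) atTop
      (nhds (σ * r / π)) :=
    (tendsto_nat_mul_of_hasDerivAt (by simpa using hasDerivAt_arctan 0) arctan_zero
      (σ * r)).div_const π
  have hc0 : ∀ᶠ m : ℕ in atTop, 0 ≤ (m : ℝ) * arctan (σ * r / m) / π :=
    (hc.eventually (lt_mem_nhds hR)).mono fun m h => le_of_lt h
  have hc1 : ∀ᶠ m : ℕ in atTop, (m : ℝ) * arctan (σ * r / m) / π ≤
      m - (m : ℝ) * arctan (σ * r / m) / π := by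
    refine Eventually.of_forall fun m => ?_
    have h : (m : ℝ) * arctan (σ * r / m) / π ≤ m / 2 := by
      rw [div_le_iff₀ hpi]
      calc (m : ℝ) * arctan (σ * r / m) ≤ m * (π / 2) := by
            gcongr; exact (arctan_lt_pi_div_two _).le
        _ = m / 2 * π := by ring
    linarith
  have hlim := (tendsto_truncated_integral k hc0 hc1 hc).const_mul (σ * π ^ (k + 1))
  have hval : σ * π ^ (k + 1) * Gamma ((k + 1 : ℕ) : ℝ) * gammaU ((k + 1 : ℕ) : ℝ) (σ * r / π) =
      σ * π ^ (k + 1) * ∫ y in Set.Ioi (σ * r / π), y ^ k * exp (-y) := by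
    have hG : Gamma ((k + 1 : ℕ) : ℝ) ≠ 0 := (Gamma_pos_of_pos (by positivity)).ne'
    have he : ((k + 1 : ℕ) : ℝ) - 1 = (k : ℝ) := by push_cast; ring
    rw [gammaU, mul_assoc, mul_div_cancel₀ _ hG, he]
    simp only [rpow_natCast]
  rw [hval]
  refine hlim.congr' ?_
  filter_upwards [eventually_ge_atTop (k + 1)] with m hm
  exact (integral_substitution hσ hr hm).symm
end
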